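/- arXiv:0810.4766 — 2 statements merged into one kernel-verified Lean document; each statement's English description precedes it below -/
import Mathlib

section
/- Let n ≥ 3, let b be a real number with b + 1 > 0, let â₁,…,âₙ be real numbers, and set η = ∑_{j=2}^n âⱼ², ξ = â₁·η, a = (b+1)² + 1, and ϖ = (b+2)²ξ² + 4(b+1)η (note ϖ ≥ 0). Let A be the real symmetric n×n matrix with entries A₁₁ = ξ/(b+1), A₁ⱼ = Aⱼ₁ = b·âⱼ/√(b+1) for 2 ≤ j ≤ n, and Aⱼₗ = b·â₁·âⱼ·âₗ + δⱼₗ·ξ for 2 ≤ j,l ≤ n. Then the characteristic polynomial of A is det(λ·Iₙ − A) = (λ − ξ)^{n−2}·(λ − θ₁)·(λ − θ₂), where θ₁ = (aξ + b√ϖ)/(2(b+1)) and θ₂ = (aξ − b√ϖ)/(2(b+1)). -/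
open Matrix

/-- The `(m + 1) × 2` matrix whose columns are the first basis vector and `(0, u)`. -/
def borderedLeft {m : ℕ} (u : Fin m → ℝ) : Matrix (Fin (m + 1)) (Fin 2) ℝ :=
  (of ![Fin.cons 1 0, Fin.cons 0 u])ᵀ

/-- The `2 × (m + 1)` matrix with rows `(p, c • u)` and `(c, q • u)`. -/
def borderedRight {m : ℕ} (p c q : ℝ) (u : Fin m → ℝ) : Matrix (Fin 2) (Fin (m + 1)) ℝ :=
  of ![Fin.cons p (fun j => c * u j), Fin.cons c (fun j => q * u j)]

theorem borderedRight_mul_borderedLeft {m : ℕ} (p c q : ℝ) (u : Fin m → ℝ) :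
    borderedRight p c q u * borderedLeft u =
      !![p, c * ∑ j, u j ^ 2; c, q * ∑ j, u j ^ 2] := by
  ext i j
  fin_cases i <;> fin_cases j <;>
    simp [borderedLeft, borderedRight, mul_apply, Fin.sum_univ_succ, Finset.mul_sum, sq, mul_assoc]

theorem det_smul_one_sub_bordered {m : ℕ} (p c q : ℝ) (u : Fin m → ℝ) (hm : 1 ≤ m) (x : ℝ) :
    (x • (1 : Matrix (Fin (m + 1)) (Fin (m + 1)) ℝ) -
        borderedLeft u * borderedRight p c q u).det =
      x ^ (m - 1) * ((x - p) * (x - q * ∑ j, u j ^ 2) - c ^ 2 * ∑ j, u j ^ 2) := by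
  have h := congrArg (Polynomial.eval x)
    (charpoly_mul_comm_of_le (borderedLeft u) (borderedRight p c q u) (by simp; omega))
  rw [Polynomial.eval_mul, eval_charpoly, eval_charpoly, borderedRight_mul_borderedLeft] at h
  rw [smul_one_eq_diagonal]
  simp only [scalar_apply] at h
  rw [h, det_fin_two]
  simp
  left
  ring

/-- the characteristic polynomial of the matrix `A` (arising from Xu's
method for Navier equations) is `(λ − ξ)^{n−2}(λ − θ₁)(λ − θ₂)`, where
`θ₁ = (aξ + b√ϖ)/(2(b+1))` and `θ₂ = (aξ − b√ϖ)/(2(b+1))`.  Here the index `0`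
plays the role of the first coordinate and `w : Fin n → ℝ` is the vector
`(â₁,…,âₙ)`. -/
theorem charpoly_of_A (n : ℕ) (hn : 3 ≤ n) (b : ℝ) (hb1 : 0 < b + 1)
    (w : Fin n → ℝ) (η ξ a ϖ : ℝ)
    (hη : η = ∑ j : Fin n, if (j : ℕ) = 0 then 0 else (w j) ^ 2)
    (hξ : ξ = w ⟨0, by omega⟩ * η)
    (ha : a = (b + 1) ^ 2 + 1)
    (hϖ : ϖ = (b + 2) ^ 2 * ξ ^ 2 + 4 * (b + 1) * η)
    (A : Matrix (Fin n) (Fin n) ℝ)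
    (hA : ∀ i j : Fin n, A i j =
      if (i : ℕ) = 0 then
        (if (j : ℕ) = 0 then ξ / (b + 1) else b * w j / Real.sqrt (b + 1))
      else
        (if (j : ℕ) = 0 then b * w i / Real.sqrt (b + 1)
         else b * w ⟨0, by omega⟩ * w i * w j + (if i = j then ξ else 0))) :
    ∀ lam : ℝ,
      (lam • (1 : Matrix (Fin n) (Fin n) ℝ) - A).det =
        (lam - ξ) ^ (n - 2) *
          (lam - (a * ξ + b * Real.sqrt ϖ) / (2 * (b + 1))) *
          (lam - (a * ξ - b * Real.sqrt ϖ) / (2 * (b + 1))) := by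
  obtain ⟨m, rfl⟩ : ∃ m, n = m + 1 := ⟨n - 1, by omega⟩
  have hη' : η = ∑ j : Fin m, w j.succ ^ 2 := by simp [hη, Fin.sum_univ_succ]
  have hz : (⟨0, by omega⟩ : Fin (m + 1)) = 0 := rfl
  simp only [hz] at hξ hA
  have hb : b + 1 ≠ 0 := hb1.ne'
  have hη0 : 0 ≤ η := hη' ▸ Finset.sum_nonneg fun j _ => sq_nonneg _
  have hϖ0 : 0 ≤ ϖ := by rw [hϖ]; positivity
  intro lam
  have hdiff : lam • (1 : Matrix (Fin (m + 1)) (Fin (m + 1)) ℝ) - A =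
      (lam - ξ) • 1 - borderedLeft (fun j => w j.succ) *
        borderedRight (ξ / (b + 1) - ξ) (b / √(b + 1)) (b * w 0) (fun j => w j.succ) := by
    ext i j
    refine Fin.cases ?_ (fun i => ?_) i <;> refine Fin.cases ?_ (fun j => ?_) j <;>
      simp [hA, borderedLeft, borderedRight, Matrix.mul_apply, Fin.sum_univ_two,
        Matrix.one_apply, Fin.succ_ne_zero, (Fin.succ_ne_zero _).symm] <;>
      try split_ifs
    all_goals ring
  rw [hdiff, det_smul_one_sub_bordered _ _ _ _ (by omega), ← hη', div_pow, Real.sq_sqrt hb1.le]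
  rw [show m + 1 - 2 = m - 1 by omega, mul_assoc ((lam - ξ) ^ (m - 1))]
  congr 1
  have hs := Real.sq_sqrt hϖ0
  have hprod : (b * √ϖ) ^ 2 = b ^ 2 * ((b + 2) ^ 2 * ξ ^ 2 + 4 * (b + 1) * η) := by
    rw [mul_pow, hs, hϖ]
  have hq : b * w 0 * η = b * ξ := by rw [hξ]; ring
  rw [hq, ha]
  generalize b * √ϖ = r at hprod
  field_simp
  linear_combination hprod
end

section
/- For each r ∈ {1,…,n}, ε ∈ {0,1}, and (l₁,…,lₙ) ∈ ℕⁿ, define the n-tuple u^{(r,ε,l)} of elements of ℝ[t,x₁,…,xₙ] whose j-th component is u_j = δ_{j,r}·(t^ε·x^l + ∑_{m≥1} b^{−m}·t^{ε+2m}/(ε+2m)!·Δ^m(x^l)) + ∑_{m≥1} b^{−m}·((b+1)^m − 1)·t^{ε+2m}/(ε+2m)!·Δ^{m−1}(∂_{x_j}∂_{x_r}(x^l)), where x^l = x₁^{l₁}···xₙ^{lₙ}; the sums are finite since Δ^m(x^l) = 0 for large m, so each u^{(r,ε,l)} is a polynomial. Then each u^{(r,ε,l)} is a solution of the Lamé equations,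 and the collection {u^{(r,ε,l)} : r ∈ {1,…,n}, ε ∈ {0,1}, l ∈ ℕⁿ} is a basis of the ℝ-vector space of all polynomial solutions of the Lamé equations. -/
open MvPolynomial

/-- The spatial Laplacian `Δ = ∑ᵣ ∂²_{x_r}` on `ℝ[t,x₁,…,xₙ]`, where the variable of
index `0` is `t` and the variable of index `r.succ` is `x_r`. -/
noncomputable def lapX {n : ℕ} (p : MvPolynomial (Fin (n + 1)) ℝ) :
    MvPolynomial (Fin (n + 1)) ℝ :=
  ∑ r : Fin n, pderiv r.succ (pderiv r.succ p)

/-- `u` is a (polynomial) solution of the Lamé equations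
`∂²_t u_j = b⁻¹·Δu_j + ∂_{x_j}(∑ᵣ ∂_{x_r} u_r)`. -/
def IsLameSol {n : ℕ} (b : ℝ) (u : Fin n → MvPolynomial (Fin (n + 1)) ℝ) : Prop :=
  ∀ j : Fin n,
    pderiv (0 : Fin (n + 1)) (pderiv (0 : Fin (n + 1)) (u j)) =
      b⁻¹ • lapX (u j) + pderiv j.succ (∑ r : Fin n, pderiv r.succ (u r))

/-- The monomial `x^l = x₁^{l₁}⋯xₙ^{lₙ}`. -/
noncomputable def xPow {n : ℕ} (l : Fin n → ℕ) : MvPolynomial (Fin (n + 1)) ℝ :=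
  ∏ s : Fin n, (X s.succ) ^ (l s)

/-- The solution `u^{(r,ε,l)}` of the Lamé equations:
`u_j = δ_{j,r}·(t^ε·x^l + ∑_{m≥1} b^{−m}·t^{ε+2m}/(ε+2m)!·Δ^m(x^l))
      + ∑_{m≥1} b^{−m}·((b+1)^m − 1)·t^{ε+2m}/(ε+2m)!·Δ^{m−1}(∂_{x_j}∂_{x_r}(x^l))`.
(The sums over `m ≥ 1` are finitely supported, hence taken as `finsum`s.) -/
noncomputable def uSol {n : ℕ} (b : ℝ) (r : Fin n) (ε : ℕ) (l : Fin n → ℕ) :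
    Fin n → MvPolynomial (Fin (n + 1)) ℝ :=
  fun j =>
    (if j = r then
      (X (0 : Fin (n + 1))) ^ ε * xPow l +
        ∑ᶠ m : ℕ, ((b⁻¹) ^ (m + 1) / ((ε + 2 * (m + 1)).factorial : ℝ)) •
          ((X (0 : Fin (n + 1))) ^ (ε + 2 * (m + 1)) * lapX^[m + 1] (xPow l))
    else 0) +
    ∑ᶠ m : ℕ, ((b⁻¹) ^ (m + 1) * ((b + 1) ^ (m + 1) - 1) /
        ((ε + 2 * (m + 1)).factorial : ℝ)) •
      ((X (0 : Fin (n + 1))) ^ (ε + 2 * (m + 1)) *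
        lapX^[m] (pderiv j.succ (pderiv r.succ (xPow l))))

noncomputable section

namespace Lame

variable {n : ℕ}

/-- The partial derivative as an `ℝ`-linear endomorphism. -/
abbrev partialD (i : Fin (n + 1)) : Module.End ℝ (MvPolynomial (Fin (n + 1)) ℝ) :=
  (pderiv i : Derivation ℝ (MvPolynomial (Fin (n + 1)) ℝ) _).toLinearMap

/-- The spatial Laplacian as an `ℝ`-linear endomorphism. -/
def laplacian : Module.End ℝ (MvPolynomial (Fin (n + 1)) ℝ) :=
  ∑ r : Fin n, partialD r.succ * partialD r.succ

/-- The spatial gradient. -/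
def grad : MvPolynomial (Fin (n + 1)) ℝ →ₗ[ℝ] (Fin n → MvPolynomial (Fin (n + 1)) ℝ) :=
  LinearMap.pi fun j => partialD j.succ

/-- The spatial divergence. -/
def divergence : (Fin n → MvPolynomial (Fin (n + 1)) ℝ) →ₗ[ℝ] MvPolynomial (Fin (n + 1)) ℝ :=
  ∑ r : Fin n, partialD r.succ ∘ₗ LinearMap.proj r

/-- The spatial part `u ↦ b⁻¹ Δ u + ∇ div u` of the Lamé operator. -/
def spatialOp (b : ℝ) : Module.End ℝ (Fin n → MvPolynomial (Fin (n + 1)) ℝ) :=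
  b⁻¹ • LinearMap.compLeft laplacian (Fin n) + grad ∘ₗ divergence

/-- The second time derivative, componentwise. -/
def timeOp : Module.End ℝ (Fin n → MvPolynomial (Fin (n + 1)) ℝ) :=
  LinearMap.compLeft (partialD 0 * partialD 0) (Fin n)

lemma laplacian_apply (p : MvPolynomial (Fin (n + 1)) ℝ) : laplacian p = lapX p := by
  simp [laplacian, lapX]

lemma lapX_iterate (m : ℕ) (p : MvPolynomial (Fin (n + 1)) ℝ) :
    lapX^[m] p = (laplacian ^ m) p := by
  rw [Module.End.pow_apply]
  congr 1
  funext q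
  exact (laplacian_apply q).symm

lemma grad_apply (p : MvPolynomial (Fin (n + 1)) ℝ) (j : Fin n) :
    grad p j = pderiv j.succ p := rfl

lemma divergence_apply (u : Fin n → MvPolynomial (Fin (n + 1)) ℝ) :
    divergence u = ∑ r : Fin n, pderiv r.succ (u r) := by
  simp [divergence]

lemma spatialOp_eq (b : ℝ) (u : Fin n → MvPolynomial (Fin (n + 1)) ℝ) :
    spatialOp b u = b⁻¹ • (fun j => laplacian (u j)) + grad (divergence u) := rfl

lemma isLameSol_iff (b : ℝ) (u : Fin n → MvPolynomial (Fin (n + 1)) ℝ) :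
    IsLameSol b u ↔ timeOp u = spatialOp b u := by
  rw [funext_iff]
  refine forall_congr' fun j => ?_
  rw [← laplacian_apply, ← divergence_apply]
  rfl

lemma pderiv_comm (i j : Fin (n + 1)) (p : MvPolynomial (Fin (n + 1)) ℝ) :
    pderiv i (pderiv j p) = pderiv j (pderiv i p) := by
  ext d
  simp only [coeff_pderiv]
  rcases eq_or_ne i j with rfl | h
  · rfl
  · rw [add_right_comm]
    simp [h, h.symm]
    ring

lemma partialD_commute (i j : Fin (n + 1)) : Commute (partialD i) (partialD j) :=
  LinearMap.ext fun p => pderiv_comm i j p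

lemma partialD_commute_laplacian (i : Fin (n + 1)) : Commute (partialD i) laplacian :=
  Commute.sum_right _ _ _ fun _ _ =>
    (partialD_commute i _).mul_right (partialD_commute i _)

lemma pderiv_laplacian_pow (i : Fin (n + 1)) (m : ℕ) (p : MvPolynomial (Fin (n + 1)) ℝ) :
    pderiv i ((laplacian ^ m) p) = (laplacian ^ m) (pderiv i p) :=
  LinearMap.congr_fun ((partialD_commute_laplacian i).pow_right m).eq p

lemma pderiv_laplacian (i : Fin (n + 1)) (p : MvPolynomial (Fin (n + 1)) ℝ) :
    pderiv i (laplacian p) = laplacian (pderiv i p) := by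
  simpa using pderiv_laplacian_pow i 1 p

lemma divergence_grad (p : MvPolynomial (Fin (n + 1)) ℝ) :
    divergence (grad p) = laplacian p := by
  simp [divergence_apply, grad_apply, laplacian_apply, lapX]

lemma divergence_single (r : Fin n) (p : MvPolynomial (Fin (n + 1)) ℝ) :
    divergence (Pi.single r p) = pderiv r.succ p := by
  rw [divergence_apply, Finset.sum_eq_single r]
  · simp
  · intro s _ hs
    simp [hs]
  · simp

lemma spatialOp_single (b : ℝ) (r : Fin n) (p : MvPolynomial (Fin (n + 1)) ℝ) :
    spatialOp b (Pi.single r p) =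
      Pi.single r (b⁻¹ • laplacian p) + grad (pderiv r.succ p) := by
  rw [spatialOp_eq, divergence_single]
  congr 1
  ext1 j
  rcases eq_or_ne j r with rfl | h <;> simp [*]

lemma spatialOp_grad (b : ℝ) (p : MvPolynomial (Fin (n + 1)) ℝ) :
    spatialOp b (grad p) = (b⁻¹ + 1) • grad (laplacian p) := by
  rw [spatialOp_eq, divergence_grad, add_smul, one_smul]
  congr 2
  ext1 j
  exact (pderiv_laplacian j.succ p).symm

lemma spatialOp_pow_single {b : ℝ} (hb : b ≠ 0) (r : Fin n)
    (p : MvPolynomial (Fin (n + 1)) ℝ) (m : ℕ) :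
    (spatialOp b ^ (m + 1)) (Pi.single r p) =
      Pi.single r (b⁻¹ ^ (m + 1) • (laplacian ^ (m + 1)) p) +
        (b⁻¹ ^ (m + 1) * ((b + 1) ^ (m + 1) - 1)) •
          grad ((laplacian ^ m) (pderiv r.succ p)) := by
  induction m with
  | zero => simp [spatialOp_single, hb]
  | succ m ih =>
    rw [pow_succ', Module.End.mul_apply, ih, map_add, map_smul, spatialOp_single,
      spatialOp_grad, Derivation.map_smul, pderiv_laplacian_pow, map_smul, map_smul,
      ← Module.End.mul_apply, ← Module.End.mul_apply, ← pow_succ', ← pow_succ', smul_smul,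
      smul_smul, ← pow_succ', add_assoc, ← add_smul]
    congr 2
    simp only [inv_pow]
    field_simp
    ring

lemma coeff_laplacian_eq_zero {N : ℕ} {p : MvPolynomial (Fin (n + 1)) ℝ}
    (h : ∀ d : Fin (n + 1) →₀ ℕ, N + 1 ≤ d.degree → coeff d p = 0)
    (d : Fin (n + 1) →₀ ℕ) (hd : N ≤ d.degree) : coeff d (laplacian p) = 0 := by
  rw [laplacian_apply, lapX, coeff_sum]
  refine Finset.sum_eq_zero fun r _ => ?_
  rw [coeff_pderiv, coeff_pderiv, h, zero_mul, zero_mul]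
  simp only [map_add, Finsupp.degree_single]
  omega

lemma laplacian_pow_eq_zero {N : ℕ} {p : MvPolynomial (Fin (n + 1)) ℝ}
    (h : ∀ d : Fin (n + 1) →₀ ℕ, N ≤ d.degree → coeff d p = 0) :
    (laplacian ^ N) p = 0 := by
  induction N generalizing p with
  | zero => ext d; simpa using h d (Nat.zero_le _)
  | succ N ih =>
    rw [pow_succ, Module.End.mul_apply]
    exact ih (coeff_laplacian_eq_zero h)

lemma exists_laplacian_pow_eq_zero (p : MvPolynomial (Fin (n + 1)) ℝ) :
    ∃ N, (laplacian ^ N) p = 0 := by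
  refine ⟨p.totalDegree + 1, laplacian_pow_eq_zero fun d hd => ?_⟩
  exact coeff_eq_zero_of_totalDegree_lt hd

lemma laplacian_pow_eq_zero_of_le {p : MvPolynomial (Fin (n + 1)) ℝ} {N m : ℕ}
    (hN : (laplacian ^ N) p = 0) (h : N ≤ m) : (laplacian ^ m) p = 0 := by
  rw [← Nat.sub_add_cancel h, pow_add, Module.End.mul_apply, hN, map_zero]

lemma spatialOp_pow_single_eq_zero {b : ℝ} (hb : b ≠ 0) (r : Fin n)
    {p : MvPolynomial (Fin (n + 1)) ℝ} {N : ℕ} (hN : (laplacian ^ N) p = 0) :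
    (spatialOp b ^ (N + 1)) (Pi.single r p) = 0 := by
  rw [spatialOp_pow_single hb, laplacian_pow_eq_zero_of_le hN N.le_succ,
    ← pderiv_laplacian_pow, hN]
  simp

lemma finsum_eq_sum_range {M : Type*} [AddCommMonoid M] {f : ℕ → M} {N : ℕ}
    (h : ∀ m, N ≤ m → f m = 0) : ∑ᶠ m, f m = ∑ m ∈ Finset.range N, f m := by
  refine finsum_eq_sum_of_support_subset f fun m hm => ?_
  by_contra hmN
  exact hm (h m (by simpa using hmN))

/-- The terms of the series `∑ tᵏ/k! Lᵐ v`, `k = ε + 2m`. -/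
def seriesTerm (b : ℝ) (ε : ℕ) (v : Fin n → MvPolynomial (Fin (n + 1)) ℝ) (m : ℕ) :
    Fin n → MvPolynomial (Fin (n + 1)) ℝ :=
  ((ε + 2 * m).factorial : ℝ)⁻¹ •
    (X 0 : MvPolynomial (Fin (n + 1)) ℝ) ^ (ε + 2 * m) • (spatialOp b ^ m) v

lemma uSol_eq_sum {b : ℝ} (hb : b ≠ 0) (r : Fin n) {ε : ℕ} (hε : ε ≤ 1) (l : Fin n → ℕ)
    {N : ℕ} (hN : (laplacian ^ N) (xPow l) = 0) :
    uSol b r ε l =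
      ∑ m ∈ Finset.range (N + 1), seriesTerm b ε (Pi.single r (xPow l)) m := by
  have hε' : (ε.factorial : ℝ) = 1 := by interval_cases ε <;> simp
  ext1 j
  rw [Finset.sum_range_succ', Pi.add_apply, Finset.sum_apply]
  simp only [uSol, seriesTerm, lapX_iterate, spatialOp_pow_single hb]
  rw [finsum_eq_sum_range (N := N) fun m hm => ?_,
    finsum_eq_sum_range (N := N) fun m hm => ?_]
  · rcases eq_or_ne j r with rfl | h
    · simp only [↓reduceIte]
      rw [add_assoc, ← Finset.sum_add_distrib, add_comm (X 0 ^ ε * xPow l)]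
      congr 1
      · refine Finset.sum_congr rfl fun m _ => ?_
        simp only [Pi.smul_apply, Pi.add_apply, Pi.single_eq_same, grad_apply,
          pderiv_laplacian_pow, smul_eq_mul, mul_add, smul_add, mul_smul_comm, smul_smul]
        congr 2 <;> ring
      · simp [hε']
    · simp only [if_neg h, zero_add]
      simp only [Pi.smul_apply, Pi.add_apply, Pi.single_eq_of_ne h, grad_apply, zero_add,
          pderiv_laplacian_pow, smul_eq_mul, mul_smul_comm, smul_smul]
      simp [h, div_eq_inv_mul]
  · rw [← pderiv_laplacian_pow, ← pderiv_laplacian_pow, laplacian_pow_eq_zero_of_le hN hm]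
    simp
  · rw [laplacian_pow_eq_zero_of_le hN (by omega)]
    simp

lemma pderiv_zero_xPow (l : Fin n → ℕ) : pderiv 0 (xPow l) = 0 := by
  refine Finset.prod_induction _ (fun p => pderiv 0 p = 0) (fun p q hp hq => ?_) pderiv_one
    fun s _ => ?_
  · rw [pderiv_mul, hp, hq, zero_mul, mul_zero, add_zero]
  · rw [pderiv_pow, pderiv_X_of_ne (Fin.succ_ne_zero s), mul_zero]

lemma spatialOp_X_pow_smul (b : ℝ) (k : ℕ) (v : Fin n → MvPolynomial (Fin (n + 1)) ℝ) :
    spatialOp b ((X 0 : MvPolynomial (Fin (n + 1)) ℝ) ^ k • v) =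
      (X 0 : MvPolynomial (Fin (n + 1)) ℝ) ^ k • spatialOp b v := by
  have hp (i : Fin n) (q : MvPolynomial (Fin (n + 1)) ℝ) :
      pderiv i.succ (X 0 ^ k * q) = X 0 ^ k * pderiv i.succ q := by
    rw [pderiv_mul, pderiv_pow, pderiv_X_of_ne (Fin.succ_ne_zero i).symm]
    simp
  ext1 j
  simp only [spatialOp_eq, grad_apply, divergence_apply, laplacian_apply, lapX, Pi.add_apply,
    Pi.smul_apply, smul_eq_mul, hp, ← Finset.mul_sum, mul_add, mul_smul_comm]

lemma pderiv_zero_spatialOp_pow (b : ℝ) {v : Fin n → MvPolynomial (Fin (n + 1)) ℝ}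
    (hv : ∀ j, pderiv 0 (v j) = 0) (m : ℕ) (j : Fin n) :
    pderiv 0 ((spatialOp b ^ m) v j) = 0 := by
  induction m generalizing j with
  | zero => exact hv j
  | succ m ih =>
    rw [pow_succ', Module.End.mul_apply, spatialOp_eq, Pi.add_apply, grad_apply]
    simp only [divergence_apply, Pi.smul_apply, map_add,
      Derivation.map_smul, pderiv_laplacian, ih, map_sum, pderiv_comm 0, map_zero,
      smul_zero, Finset.sum_const_zero, add_zero]

lemma timeOp_seriesTerm_zero (b : ℝ) {ε : ℕ} (hε : ε ≤ 1)
    {v : Fin n → MvPolynomial (Fin (n + 1)) ℝ} (hv : ∀ j, pderiv 0 (v j) = 0) :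
    timeOp (seriesTerm b ε v 0) = 0 := by
  ext1 j
  change pderiv 0 (pderiv 0 (seriesTerm b ε v 0 j)) = 0
  interval_cases ε <;> simp [seriesTerm, hv]

lemma pderiv_X_pow_succ_mul {w : MvPolynomial (Fin (n + 1)) ℝ} (hw : pderiv 0 w = 0) (k : ℕ) :
    pderiv 0 (X 0 ^ (k + 1) * w) = ((k + 1 : ℕ) : ℝ) • (X 0 ^ k * w) := by
  rw [pderiv_mul, pderiv_pow, hw, pderiv_X_self, MvPolynomial.smul_eq_C_mul]
  simp
  ring

lemma timeOp_X_pow_smul {w : Fin n → MvPolynomial (Fin (n + 1)) ℝ}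
    (hw : ∀ j, pderiv 0 (w j) = 0) (k : ℕ) :
    timeOp ((X 0 : MvPolynomial (Fin (n + 1)) ℝ) ^ (k + 2) • w) =
      (((k + 2 : ℕ) : ℝ) * ((k + 1 : ℕ) : ℝ)) •
        (X 0 : MvPolynomial (Fin (n + 1)) ℝ) ^ k • w := by
  ext1 j
  have h : timeOp ((X 0 : MvPolynomial (Fin (n + 1)) ℝ) ^ (k + 2) • w) j =
      pderiv 0 (pderiv 0 (X 0 ^ (k + 1 + 1) * w j)) := rfl
  rw [h, pderiv_X_pow_succ_mul (hw j), Derivation.map_smul, pderiv_X_pow_succ_mul (hw j),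
    smul_smul, Pi.smul_apply, Pi.smul_apply, smul_eq_mul]

lemma timeOp_seriesTerm_succ (b : ℝ) (ε m : ℕ)
    {v : Fin n → MvPolynomial (Fin (n + 1)) ℝ} (hv : ∀ j, pderiv 0 (v j) = 0) :
    timeOp (seriesTerm b ε v (m + 1)) = spatialOp b (seriesTerm b ε v m) := by
  have hk : ε + 2 * (m + 1) = ε + 2 * m + 2 := by ring
  have hfac (k : ℕ) : ((k + 2).factorial : ℝ)⁻¹ * (((k + 2 : ℕ) : ℝ) * ((k + 1 : ℕ) : ℝ)) =
      (k.factorial : ℝ)⁻¹ := by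
    rw [Nat.factorial_succ, Nat.factorial_succ]
    push_cast
    field_simp
    ring
  rw [seriesTerm, seriesTerm, timeOp.map_smul, (spatialOp b).map_smul, spatialOp_X_pow_smul,
    ← Module.End.mul_apply, ← pow_succ', hk,
    timeOp_X_pow_smul (pderiv_zero_spatialOp_pow b hv (m + 1)), smul_smul, hfac]

lemma isLameSol_uSol {b : ℝ} (hb : b ≠ 0) (r : Fin n) {ε : ℕ} (hε : ε ≤ 1)
    (l : Fin n → ℕ) : IsLameSol b (uSol b r ε l) := by
  obtain ⟨N, hN⟩ := exists_laplacian_pow_eq_zero (xPow l)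
  have hv (j : Fin n) :
      pderiv 0 ((Pi.single r (xPow l) : Fin n → MvPolynomial (Fin (n + 1)) ℝ) j) = 0 := by
    rcases eq_or_ne j r with rfl | h <;> simp [*, pderiv_zero_xPow]
  rw [isLameSol_iff, uSol_eq_sum hb r hε l hN, map_sum, map_sum, Finset.sum_range_succ',
    timeOp_seriesTerm_zero b hε hv, Finset.sum_range_succ]
  congr 1
  · exact Finset.sum_congr rfl fun m _ => timeOp_seriesTerm_succ b ε m hv
  · rw [seriesTerm, map_smul, spatialOp_X_pow_smul, ← Module.End.mul_apply, ← pow_succ',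
      spatialOp_pow_single_eq_zero hb r hN, smul_zero, smul_zero]

/-- The exponent of the monomial `t^ε x^l`. -/
def expo (ε : ℕ) (l : Fin n → ℕ) : Fin (n + 1) →₀ ℕ :=
  Finsupp.cons ε (Finsupp.equivFunOnFinite.symm l)

lemma expo_inj {ε ε' : ℕ} {l l' : Fin n → ℕ} :
    expo ε l = expo ε' l' ↔ ε = ε' ∧ l = l' := by
  simp [expo, Finsupp.cons_injective2.eq_iff]

lemma expo_apply_zero_tail (d : Fin (n + 1) →₀ ℕ) : expo (d 0) (fun s => d s.succ) = d :=
  Finsupp.cons_tail d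

lemma X_pow_mul_xPow (ε : ℕ) (l : Fin n → ℕ) :
    (X 0 : MvPolynomial (Fin (n + 1)) ℝ) ^ ε * xPow l = monomial (expo ε l) 1 := by
  rw [monomial_eq, Finsupp.prod_fintype _ _ (by simp), Fin.prod_univ_succ]
  simp [expo, xPow]

lemma coeff_X_pow_mul_eq_zero {k : ℕ} {d : Fin (n + 1) →₀ ℕ} (h : d 0 < k)
    (p : MvPolynomial (Fin (n + 1)) ℝ) : coeff d (X 0 ^ k * p) = 0 := by
  rw [X_pow_eq_monomial, coeff_monomial_mul', if_neg]
  intro hle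
  have := hle 0
  simp at this
  omega

lemma coeff_uSol {b : ℝ} (hb : b ≠ 0) (r : Fin n) {ε : ℕ} (hε : ε ≤ 1) (l : Fin n → ℕ)
    (j : Fin n) {ε' : ℕ} (hε' : ε' ≤ 1) (l' : Fin n → ℕ) :
    coeff (expo ε' l') (uSol b r ε l j) = if r = j ∧ ε = ε' ∧ l = l' then 1 else 0 := by
  obtain ⟨N, hN⟩ := exists_laplacian_pow_eq_zero (xPow l)
  rw [uSol_eq_sum hb r hε l hN, Finset.sum_range_succ', Pi.add_apply, Finset.sum_apply,
    coeff_add, coeff_sum, Finset.sum_eq_zero, zero_add]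
  · have hfac : (ε.factorial : ℝ) = 1 := by interval_cases ε <;> simp
    rcases eq_or_ne r j with rfl | h
    · simp [seriesTerm, hfac, X_pow_mul_xPow, coeff_monomial, expo_inj]
    · simp [seriesTerm, h, h.symm]
  · intro m _
    rw [seriesTerm, Pi.smul_apply, Pi.smul_apply, smul_eq_mul, coeff_smul, coeff_X_pow_mul_eq_zero, smul_zero]
    simp [expo]
    omega

/-- The index set of the basis. -/
abbrev Index (n : ℕ) := Fin n × {ε : ℕ // ε ≤ 1} × (Fin n → ℕ)

/-- The Cauchy datum of `u` at the given index: a coefficient of `u` of degree at most one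
in `t`. -/
def cauchyDatum (q : Index n) : Module.Dual ℝ (Fin n → MvPolynomial (Fin (n + 1)) ℝ) :=
  lcoeff ℝ (expo q.2.1.1 q.2.2) ∘ₗ LinearMap.proj q.1

lemma cauchyDatum_apply (q : Index n) (u : Fin n → MvPolynomial (Fin (n + 1)) ℝ) :
    cauchyDatum q u = coeff (expo q.2.1.1 q.2.2) (u q.1) := rfl

lemma cauchyDatum_uSol {b : ℝ} (hb : b ≠ 0) (q p : Index n) :
    cauchyDatum q (uSol b p.1 p.2.1.1 p.2.2) = if p = q then 1 else 0 := by
  rw [cauchyDatum_apply, coeff_uSol hb _ p.2.1.2 _ _ q.2.1.2]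
  simp only [Prod.ext_iff, Subtype.ext_iff]

lemma finite_setOf_cauchyDatum_ne_zero (u : Fin n → MvPolynomial (Fin (n + 1)) ℝ) :
    {q : Index n | cauchyDatum q u ≠ 0}.Finite := by
  refine Set.Finite.of_finite_image (f := fun q => (q.1, expo q.2.1.1 q.2.2))
    (((Set.finite_univ (α := Fin n)).prod
      (Finset.univ.biUnion fun j => (u j).support).finite_toSet).subset ?_) ?_
  · rintro _ ⟨q, hq, rfl⟩
    simpa using ⟨q.1, hq⟩
  · rintro ⟨r, ⟨ε, _⟩, l⟩ _ ⟨r', ⟨ε', _⟩, l'⟩ _ h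
    simpa [expo_inj] using h

lemma eq_zero_of_cauchyDatum_eq_zero {b : ℝ} {u : Fin n → MvPolynomial (Fin (n + 1)) ℝ}
    (hu : IsLameSol b u) (h : ∀ q, cauchyDatum q u = 0) : u = 0 := by
  have key (k : ℕ) : ∀ (j : Fin n) (d : Fin (n + 1) →₀ ℕ), d 0 = k → coeff d (u j) = 0 := by
    induction k using Nat.strong_induction_on with
    | _ k ih =>
      intro j d hd
      by_cases hk : k ≤ 1
      · subst hd
        have := h (j, ⟨d 0, hk⟩, fun s => d s.succ)
        rwa [cauchyDatum_apply, expo_apply_zero_tail] at this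
      · obtain ⟨k, rfl⟩ : ∃ k', k = k' + 2 := ⟨k - 2, by omega⟩
        obtain ⟨e, rfl⟩ : ∃ e, d = e + Finsupp.single 0 1 + Finsupp.single 0 1 := by
          refine ⟨d - Finsupp.single 0 2, ?_⟩
          rw [add_assoc, ← Finsupp.single_add, tsub_add_cancel_of_le]
          simp [hd]
        have he : e 0 = k := by simpa using hd
        have hspace (i i' j' : Fin n) : coeff e (pderiv i.succ (pderiv i'.succ (u j'))) = 0 := by
          rw [coeff_pderiv, coeff_pderiv, ih k (by omega), zero_mul, zero_mul]
          simp [he]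
        have hcoeff := congrArg (coeff e) (hu j)
        rw [coeff_add, coeff_smul, lapX, map_sum, coeff_sum, coeff_sum,
          Finset.sum_eq_zero fun r _ => hspace r r j,
          Finset.sum_eq_zero fun r _ => hspace j r r, smul_zero, add_zero,
          coeff_pderiv, coeff_pderiv] at hcoeff
        have h1 : ((e 0 : ℝ) + 1) ≠ 0 := by positivity
        have h2 : (((e + Finsupp.single 0 1 : Fin (n + 1) →₀ ℕ) 0 : ℝ) + 1) ≠ 0 := by
          positivity
        simpa [h1, h2, -Finsupp.coe_add] using hcoeff
  funext j
  ext d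
  exact key _ j d rfl

lemma mem_span_of_isLameSol {b : ℝ} (hb : b ≠ 0)
    {u : Fin n → MvPolynomial (Fin (n + 1)) ℝ} (hu : IsLameSol b u) :
    u ∈ Submodule.span ℝ (Set.range fun p : Index n => uSol b p.1 p.2.1.1 p.2.2) := by
  set F := (finite_setOf_cauchyDatum_ne_zero u).toFinset
  set w := ∑ p ∈ F, cauchyDatum p u • uSol b p.1 p.2.1.1 p.2.2 with hw
  have hsub : u - w = 0 := by
    refine eq_zero_of_cauchyDatum_eq_zero (b := b) ?_ fun q => ?_
    · rw [isLameSol_iff, map_sub, map_sub, (isLameSol_iff b u).1 hu, hw, map_sum, map_sum]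
      congr 1
      refine Finset.sum_congr rfl fun p _ => ?_
      rw [map_smul, map_smul, (isLameSol_iff b _).1 (isLameSol_uSol hb p.1 p.2.1.2 p.2.2)]
    · rw [map_sub, hw, map_sum]
      simp only [map_smul, cauchyDatum_uSol hb, smul_eq_mul, mul_ite, mul_one, mul_zero,
        Finset.sum_ite_eq']
      by_cases hq : cauchyDatum q u = 0 <;> simp [F, hq]
  rw [sub_eq_zero.1 hsub]
  exact Submodule.sum_mem _ fun p _ =>
    Submodule.smul_mem _ _ (Submodule.subset_span ⟨p, rfl⟩)

end Lame

end

/-- each `u^{(r,ε,l)}` (for `r ∈ {1,…,n}`, `ε ∈ {0,1}`, `l ∈ ℕⁿ`) is a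
polynomial solution of the Lamé equations, and the whole collection is a basis of the
ℝ-vector space of polynomial solutions of the Lamé equations: it is linearly
independent and spans all polynomial solutions. -/
theorem lame_basis (n : ℕ) (hn : 3 ≤ n) (b : ℝ) (hb : b ≠ 0) (hb1 : 0 < b + 1) :
    (∀ (r : Fin n) (ε : ℕ), ε ≤ 1 → ∀ l : Fin n → ℕ, IsLameSol b (uSol b r ε l)) ∧
    LinearIndependent ℝ
      (fun p : Fin n × {ε : ℕ // ε ≤ 1} × (Fin n → ℕ) =>
        uSol b p.1 p.2.1.1 p.2.2) ∧
    (∀ u : Fin n → MvPolynomial (Fin (n + 1)) ℝ, IsLameSol b u →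
      u ∈ Submodule.span ℝ
        (Set.range (fun p : Fin n × {ε : ℕ // ε ≤ 1} × (Fin n → ℕ) =>
          uSol b p.1 p.2.1.1 p.2.2))) := by
  exact ⟨fun r _ hε l => Lame.isLameSol_uSol hb r hε l,
    LinearIndependent.of_pairwise_dual_eq_zero_one _ Lame.cauchyDatum
      (fun q p hqp => (Lame.cauchyDatum_uSol hb q p).trans (if_neg hqp.symm))
      (fun q => (Lame.cauchyDatum_uSol hb q q).trans (if_pos rfl)),
    fun _ hu => Lame.mem_span_of_isLameSol hb hu⟩
end
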